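/- arXiv:2311.02618 — 2 statements merged into one kernel-verified Lean document; each statement's English description precedes it below -/
import Mathlib

section
/- Let θ be uniformly distributed on [0, 2π) and set u = (cos θ, sin θ) ∈ ℝ². For any two nonzero vectors a, b ∈ ℝ², P(⟨u, a⟩ ≤ 0 and ⟨u, b⟩ ≤ 0) = (π − arccos(⟨a,b⟩/(‖a‖·‖b‖))) / (2π). -/
/-!
Writing `a = ‖a‖ (cos α, sin α)` and `b = ‖b‖ (cos β, sin β)`, the event says that both
`cos (θ - α) ≤ 0` and `cos (θ - β) ≤ 0`. With `δ = arccos (cos (β - α)) ∈ [0, π]`, one has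
`β ≡ α ± δ` modulo `2π`, and swapping `a` and `b` exchanges the signs, so `β ≡ α + δ` may be assumed.
Shifting by `α` and using `2π`-periodicity, the event is measured on the period
`(π/2, 5π/2)`, where up to endpoints it is the interval `[π/2 + δ, 3π/2]`, of length `π - δ`.
Periodicity and the shift are handled by integrating indicator functions
(`volume_real_cos_nonpos_inter`).
-/


open MeasureTheory ProbabilityTheory Real
open scoped RealInnerProductSpace ENNReal

/-- The uniform probability measure on `[0, 2π)`: normalized Lebesgue measure restricted
to `[0, 2π)`. -/
noncomputable def uniformAngle : Measure ℝ :=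
  (ENNReal.ofReal (2 * π))⁻¹ • volume.restrict (Set.Ico 0 (2 * π))

/-- The unit direction `(cos θ, sin θ)` in `ℝ²`. -/
noncomputable def planarDir (θ : ℝ) : EuclideanSpace ℝ (Fin 2) :=
  (WithLp.equiv 2 (Fin 2 → ℝ)).symm ![Real.cos θ, Real.sin θ]

lemma exists_polar (a : EuclideanSpace ℝ (Fin 2)) :
    ∃ α : ℝ, a 0 = ‖a‖ * cos α ∧ a 1 = ‖a‖ * sin α := by
  have h : ‖a‖ = ‖(⟨a 0, a 1⟩ : ℂ)‖ := by
    rw [EuclideanSpace.norm_eq, Complex.norm_eq_sqrt_sq_add_sq]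
    simp [Fin.sum_univ_two]
  refine ⟨Complex.arg ⟨a 0, a 1⟩, ?_, ?_⟩
  · rw [h, Complex.norm_mul_cos_arg]
  · rw [h, Complex.norm_mul_sin_arg]

/-- On the period `(π/2, 5π/2)` the two half-circle conditions cut out an interval of length
`π - δ`, up to endpoints. -/
lemma volume_real_cos_nonpos_Ioo {δ : ℝ} (h0 : 0 ≤ δ) (hπ : δ ≤ π) :
    volume.real (Set.Ioo (π / 2) (π / 2 + 2 * π) ∩ {x | cos x ≤ 0 ∧ cos (x - δ) ≤ 0}) = π - δ := by
  have hpi := Real.pi_pos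
  have hsub : Set.Ioo (π / 2) (π / 2 + 2 * π) ∩ {x | cos x ≤ 0 ∧ cos (x - δ) ≤ 0}
      ⊆ Set.Icc (π / 2 + δ) (π + π / 2) := by
    rintro x ⟨⟨h1, h2⟩, h3, h4⟩
    have hx : x ≤ π + π / 2 := by
      by_contra! h
      have : 0 < cos (x - 2 * π) := cos_pos_of_mem_Ioo ⟨by linarith, by linarith⟩
      rw [cos_sub_two_pi] at this
      exact absurd h3 (not_le.2 this)
    refine ⟨?_, hx⟩
    by_contra! h
    exact absurd h4 (not_le.2 (cos_pos_of_mem_Ioo ⟨by linarith, by linarith⟩))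
  have hsup : Set.Ioo (π / 2 + δ) (π + π / 2)
      ⊆ Set.Ioo (π / 2) (π / 2 + 2 * π) ∩ {x | cos x ≤ 0 ∧ cos (x - δ) ≤ 0} := by
    rintro x ⟨h1, h2⟩
    exact ⟨⟨by linarith, by linarith⟩,
      cos_nonpos_of_pi_div_two_le_of_le (by linarith) (by linarith),
      cos_nonpos_of_pi_div_two_le_of_le (by linarith) (by linarith)⟩
  apply le_antisymm
  · refine (measureReal_mono hsub (by simp)).trans ?_
    rw [Real.volume_real_Icc_of_le (by linarith)]
    linarith
  · refine le_trans ?_ (measureReal_mono hsup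
      (ne_top_of_le_ne_top measure_Ioo_lt_top.ne (measure_mono Set.inter_subset_left)))
    rw [Real.volume_real_Ioo_of_le (by linarith)]
    linarith

/-- The event for directions at angles `α` and `α + δ`, reduced to `volume_real_cos_nonpos_Ioo`:
by periodicity the integral of the indicator over a full period does not depend on where the
period starts. -/
lemma volume_real_cos_nonpos_inter {δ : ℝ} (h0 : 0 ≤ δ) (hπ : δ ≤ π) (α : ℝ) :
    volume.real (Set.Ico 0 (2 * π) ∩ {θ | cos (θ - α) ≤ 0 ∧ cos (θ - (α + δ)) ≤ 0}) = π - δ := by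
  have hpi := Real.pi_pos
  set S : Set ℝ := {x | cos x ≤ 0 ∧ cos (x - δ) ≤ 0} with hS
  have hSm : MeasurableSet S := by
    rw [hS, Set.ofPred_and]
    exact (measurableSet_le (by fun_prop) (by fun_prop)).inter
      (measurableSet_le (by fun_prop) (by fun_prop))
  have hTm : MeasurableSet {θ | cos (θ - α) ≤ 0 ∧ cos (θ - (α + δ)) ≤ 0} := by
    rw [Set.ofPred_and]
    exact (measurableSet_le (by fun_prop) (by fun_prop)).inter
      (measurableSet_le (by fun_prop) (by fun_prop))
  set f : ℝ → ℝ := S.indicator 1 with hf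
  have hper : Function.Periodic f (2 * π) := by
    intro x
    have : x + 2 * π - δ = (x - δ) + 2 * π := by ring
    simp only [hf, Set.indicator_apply, hS, Set.mem_ofPred_eq, cos_add_two_pi, this, Pi.one_apply]
  have hshift : ∀ θ, f (θ - α)
      = {θ | cos (θ - α) ≤ 0 ∧ cos (θ - (α + δ)) ≤ 0}.indicator (1 : ℝ → ℝ) θ := by
    intro θ
    simp only [hf, Set.indicator_apply, hS, Set.mem_ofPred_eq, sub_sub, Pi.one_apply]
  have e1 : ∫ θ in (0 : ℝ)..(2 * π), f (θ - α)
      = volume.real (Set.Ico 0 (2 * π) ∩ {θ | cos (θ - α) ≤ 0 ∧ cos (θ - (α + δ)) ≤ 0}) := by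
    rw [intervalIntegral.integral_of_le (by linarith), ← integral_Ico_eq_integral_Ioc]
    simp only [hshift]
    rw [setIntegral_indicator hTm]
    simp
  have e2 : ∫ x in (π / 2)..(π / 2 + 2 * π), f x
      = volume.real (Set.Ioo (π / 2) (π / 2 + 2 * π) ∩ S) := by
    rw [intervalIntegral.integral_of_le (by linarith), integral_Ioc_eq_integral_Ioo,
      hf, setIntegral_indicator hSm]
    simp
  rw [← e1, intervalIntegral.integral_comp_sub_right (fun x => f x) α,
    show 2 * π - α = (0 - α) + 2 * π by ring, hper.intervalIntegral_add_eq (0 - α) (π / 2), e2,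
    volume_real_cos_nonpos_Ioo h0 hπ]

/-- **Planar uniform-direction orthant identity.**  If `θ` is uniform on `[0, 2π)` and
`u = (cos θ, sin θ)`, then for nonzero `a, b ∈ ℝ²`,
`P(⟨u,a⟩ ≤ 0 ∧ ⟨u,b⟩ ≤ 0) = (π − arccos(⟨a,b⟩/(‖a‖‖b‖))) / (2π)`. -/
theorem planar_uniform_orthant_probability
    (a b : EuclideanSpace ℝ (Fin 2)) (ha : a ≠ 0) (hb : b ≠ 0) :
    (uniformAngle {θ : ℝ | ⟪planarDir θ, a⟫ ≤ 0 ∧ ⟪planarDir θ, b⟫ ≤ 0}).toReal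
      = (π - Real.arccos (⟪a, b⟫ / (‖a‖ * ‖b‖))) / (2 * π) := by
  obtain ⟨α, ha0, ha1⟩ := exists_polar a
  obtain ⟨β, hb0, hb1⟩ := exists_polar b
  have hna : 0 < ‖a‖ := norm_pos_iff.2 ha
  have hnb : 0 < ‖b‖ := norm_pos_iff.2 hb
  have hinner : ∀ (v : EuclideanSpace ℝ (Fin 2)) (γ : ℝ), 0 < ‖v‖ → v 0 = ‖v‖ * cos γ →
      v 1 = ‖v‖ * sin γ → ∀ θ, (⟪planarDir θ, v⟫ ≤ 0 ↔ cos (θ - γ) ≤ 0) := by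
    intro v γ hv h0 h1 θ
    have : ⟪planarDir θ, v⟫ = ‖v‖ * cos (θ - γ) := by
      simp only [PiLp.inner_apply, Fin.sum_univ_two, planarDir, h0, h1, cos_sub]
      simp
      ring
    rw [this]
    exact ⟨fun h => nonpos_of_mul_nonpos_right h hv, fun h => mul_nonpos_of_nonneg_of_nonpos hv.le h⟩
  have hcos : ⟪a, b⟫ / (‖a‖ * ‖b‖) = cos (β - α) := by
    rw [div_eq_iff (by positivity)]
    simp only [PiLp.inner_apply, Fin.sum_univ_two, ha0, ha1, hb0, hb1, cos_sub]
    simp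
    ring
  have hset : {θ : ℝ | ⟪planarDir θ, a⟫ ≤ 0 ∧ ⟪planarDir θ, b⟫ ≤ 0}
      = {θ | cos (θ - α) ≤ 0 ∧ cos (θ - β) ≤ 0} := by
    ext θ
    simp only [Set.mem_ofPred_eq, hinner a α hna ha0 ha1, hinner b β hnb hb0 hb1]
  rw [hcos, hset]
  set δ := arccos (cos (β - α)) with hδ
  have hδ0 : 0 ≤ δ := arccos_nonneg _
  have hδπ : δ ≤ π := arccos_le_pi _
  have hkey : volume.real (Set.Ico 0 (2 * π) ∩ {θ | cos (θ - α) ≤ 0 ∧ cos (θ - β) ≤ 0})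
      = π - δ := by
    have hcδ : cos δ = cos (β - α) := cos_arccos (neg_one_le_cos _) (cos_le_one _)
    obtain ⟨k, hk | hk⟩ := cos_eq_cos_iff.1 hcδ
    · rw [← volume_real_cos_nonpos_inter hδ0 hδπ α]
      have : ∀ θ, cos (θ - β) = cos (θ - (α + δ)) := fun θ => by
        rw [← cos_sub_int_mul_two_pi (θ - (α + δ)) k]
        congr 1
        linarith
      simp only [this]
    · rw [← volume_real_cos_nonpos_inter hδ0 hδπ β]
      have : ∀ θ, cos (θ - α) = cos (θ - (β + δ)) := fun θ => by
        rw [← cos_add_int_mul_two_pi (θ - (β + δ)) k]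
        congr 1
        linarith
      simp only [this, and_comm]
  rw [uniformAngle, Measure.smul_apply, smul_eq_mul, ENNReal.toReal_mul, ENNReal.toReal_inv,
    ENNReal.toReal_ofReal (by positivity), Measure.restrict_apply' measurableSet_Ico,
    Set.inter_comm, ← measureReal_def, hkey]
  ring
end

section
/- Let d ≥ 1, let z ∈ ℝ^d, and let X₁, X₂ be independent, identically distributed random vectors in ℝ^d such that for every nonzero u ∈ ℝ^d one has P(⟨u, X₁ − z⟩ = 0) = 0. Then the expected angle between X₁ − z and X₂ − z satisfies E[ arccos( ⟨X₁ − z, X₂ − z⟩ / (‖X₁ − z‖ · ‖X₂ − z‖) ) ] ≤ π/2. -/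
open MeasureTheory ProbabilityTheory Real
open scoped RealInnerProductSpace ENNReal

/-!
With `U i = (X i - z) / ‖X i - z‖` and `T = ⟪U 1, U 2⟫ ∈ [-1, 1]`, the identity
`arccos t = π / 2 - arcsin t` reduces the claim to `0 ≤ E[arcsin T]`.  All the moments
`E[T ^ n]` are nonnegative (`integral_inner_pow_nonneg`): expanding the power in coordinates and
using independence writes them as sums of squares.  Since `1 / √(1 - x)` has a power series with
nonnegative coefficients, `E[T / √(1 - s² T²)] ≥ 0` for `0 ≤ s < 1`
(`integral_mul_one_div_sqrt_nonneg`).  This is the derivative of `s ↦ E[arcsin (s T)]`, which is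
therefore monotone on `[0, 1]` and vanishes at `0` (`integral_arcsin_nonneg`).

If `X i = z`, the junk value `0 / 0 = 0` makes the angle `π / 2`, in accordance with `U i = 0`, so
this event needs no separate treatment.
-/

lemma choose_half_nonneg (n : ℕ) : 0 ≤ Ring.choose ((1 / 2 : ℝ) + n - 1) n := by
  have h : n.factorial • Ring.multichoose (1 / 2 : ℝ) n = (ascPochhammer ℝ n).eval (1 / 2) := by
    rw [Ring.factorial_nsmul_multichoose_eq_ascPochhammer,
      Polynomial.ascPochhammer_smeval_eq_eval]
  rw [Ring.choose, show (1 / 2 : ℝ) + n - 1 - n + 1 = 1 / 2 by ring]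
  have h2 : 0 < (ascPochhammer ℝ n).eval (1 / 2) := ascPochhammer_pos n _ (by norm_num)
  rw [← h, nsmul_eq_mul] at h2
  exact (pos_of_mul_pos_right h2 (by positivity)).le

lemma hasSum_one_div_sqrt {x : ℝ} (hx : |x| < 1) :
    HasSum (fun n : ℕ ↦ Ring.choose ((1 / 2 : ℝ) + n - 1) n * x ^ n) (1 / √(1 - x)) := by
  have h := (Real.one_div_one_sub_rpow_hasFPowerSeriesOnBall_zero (1 / 2)).hasSum (y := x)
    (by simpa [enorm_eq_nnnorm] using! hx)
  simpa [FormalMultilinearSeries.ofScalars, Real.sqrt_eq_rpow] using h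

section Moments

variable {Ω : Type*} [MeasurableSpace Ω] {P : Measure Ω} [IsProbabilityMeasure P] {T : Ω → ℝ}

lemma integral_mul_one_div_sqrt_nonneg (hT : Measurable T) (hT1 : ∀ ω, |T ω| ≤ 1)
    (hmom : ∀ n, 0 ≤ ∫ ω, T ω ^ n ∂P) {s : ℝ} (hs0 : 0 ≤ s) (hs1 : s < 1) :
    0 ≤ ∫ ω, 1 / √(1 - (s * T ω) ^ 2) * T ω ∂P := by
  set c : ℕ → ℝ := fun n ↦ Ring.choose ((1 / 2 : ℝ) + n - 1) n with hc
  have hc0 : ∀ n, 0 ≤ c n := choose_half_nonneg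
  have hs2 : |s ^ 2| < 1 := by
    rw [abs_of_nonneg (sq_nonneg s)]; nlinarith
  have key := hasSum_integral_of_dominated_convergence (μ := P)
    (F := fun n ω ↦ c n * s ^ (2 * n) * T ω ^ (2 * n + 1))
    (f := fun ω ↦ 1 / √(1 - (s * T ω) ^ 2) * T ω)
    (fun n _ ↦ c n * (s ^ 2) ^ n)
    (fun n ↦ by fun_prop)
    (fun n ↦ .of_forall fun ω ↦ by
      rw [norm_mul, norm_pow, Real.norm_eq_abs, Real.norm_eq_abs, ← pow_mul,
        abs_of_nonneg (mul_nonneg (hc0 n) (by positivity))]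
      exact mul_le_of_le_one_right (mul_nonneg (hc0 n) (by positivity))
        (pow_le_one₀ (abs_nonneg _) (hT1 ω)))
    (.of_forall fun ω ↦ (hasSum_one_div_sqrt hs2).summable)
    (integrable_const _)
    (.of_forall fun ω ↦ by
      have hlt : |(s * T ω) ^ 2| < 1 := by
        rw [mul_pow, abs_mul]
        refine lt_of_le_of_lt (mul_le_of_le_one_right (abs_nonneg _) ?_) hs2
        rw [abs_pow]
        exact pow_le_one₀ (abs_nonneg _) (hT1 ω)
      have h : HasSum (fun n ↦ c n * ((s * T ω) ^ 2) ^ n) (1 / √(1 - (s * T ω) ^ 2)) :=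
        hasSum_one_div_sqrt hlt
      have heq : (fun n ↦ c n * s ^ (2 * n) * T ω ^ (2 * n + 1)) =
          fun n ↦ c n * ((s * T ω) ^ 2) ^ n * T ω := by
        funext n
        ring
      exact heq ▸ h.mul_right (T ω))
  refine key.nonneg fun n ↦ ?_
  rw [integral_const_mul]
  exact mul_nonneg (mul_nonneg (hc0 n) (by positivity)) (hmom _)

lemma integral_arcsin_nonneg (hT : Measurable T) (hT1 : ∀ ω, |T ω| ≤ 1)
    (hmom : ∀ n, 0 ≤ ∫ ω, T ω ^ n ∂P) : 0 ≤ ∫ ω, arcsin (T ω) ∂P := by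
  set g : ℝ → ℝ := fun s ↦ ∫ ω, arcsin (s * T ω) ∂P with hg
  have hbd : ∀ x, ‖arcsin x‖ ≤ π / 2 := fun x ↦
    abs_le.2 ⟨neg_pi_div_two_le_arcsin x, arcsin_le_pi_div_two x⟩
  have hmeas : ∀ s : ℝ, AEStronglyMeasurable (fun ω ↦ arcsin (s * T ω)) P := fun s ↦
    (measurable_arcsin.comp (hT.const_mul s)).aestronglyMeasurable
  have hcont : Continuous g := continuous_of_dominated (bound := fun _ ↦ π / 2) hmeas
    (fun s ↦ .of_forall fun ω ↦ hbd _) (integrable_const _)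
    (.of_forall fun ω ↦ continuous_arcsin.comp (continuous_id.mul continuous_const))
  have hder : ∀ s ∈ Set.Ioo (0 : ℝ) 1,
      HasDerivAt g (∫ ω, 1 / √(1 - (s * T ω) ^ 2) * T ω ∂P) s := by
    intro s hs
    -- Any `r` with `s < r < 1` gives a neighbourhood of `s` with bounded derivatives.
    obtain ⟨r, hsr, hr1⟩ := exists_between hs.2
    have hr0 : 0 < r := hs.1.trans hsr
    have hlt : ∀ ω, ∀ x ∈ Set.Ioo (-r) r, (x * T ω) ^ 2 ≤ r ^ 2 := fun ω x hx ↦ by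
      rw [sq_le_sq, abs_mul, abs_of_pos hr0]
      exact (mul_le_of_le_one_right (abs_nonneg _) (hT1 ω)).trans (abs_lt.2 hx).le
    have hr2 : 0 < 1 - r ^ 2 := by nlinarith
    refine (hasDerivAt_integral_of_dominated_loc_of_deriv_le (s := Set.Ioo (-r) r)
      (bound := fun _ ↦ 1 / √(1 - r ^ 2))
      (F := fun x ω ↦ arcsin (x * T ω)) (F' := fun x ω ↦ 1 / √(1 - (x * T ω) ^ 2) * T ω)
      (Ioo_mem_nhds (by linarith [hs.1]) hsr) (.of_forall hmeas)
      (.of_bound (hmeas s) (π / 2) (.of_forall fun ω ↦ hbd _))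
      (Measurable.aestronglyMeasurable (by fun_prop))
      (.of_forall fun ω x hx ↦ ?_) (integrable_const _) (.of_forall fun ω x hx ↦ ?_)).2
    · have := hlt ω x hx
      rw [norm_mul, Real.norm_of_nonneg (by positivity)]
      refine (mul_le_of_le_one_right (by positivity) (hT1 ω)).trans ?_
      exact one_div_le_one_div_of_le (by positivity) (Real.sqrt_le_sqrt (by linarith))
    · have := hlt ω x hx
      have h1 : x * T ω ≠ -1 := fun h ↦ by rw [h] at this; linarith
      have h2 : x * T ω ≠ 1 := fun h ↦ by rw [h] at this; linarith
      exact (Real.hasDerivAt_arcsin h1 h2).comp x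
        (by simpa using (hasDerivAt_id x).mul_const (T ω))
  have hmono : MonotoneOn g (Set.Icc 0 1) := by
    refine monotoneOn_of_deriv_nonneg (convex_Icc 0 1) hcont.continuousOn ?_ ?_ <;>
      rw [interior_Icc] <;> intro s hs
    · exact (hder s hs).differentiableAt.differentiableWithinAt
    · rw [(hder s hs).deriv]
      exact integral_mul_one_div_sqrt_nonneg hT hT1 hmom hs.1.le hs.2
  have := hmono (Set.left_mem_Icc.2 zero_le_one) (Set.right_mem_Icc.2 zero_le_one) zero_le_one
  simpa [hg] using this

/-- The inner product of independent vectors `U`, `V` with the same law has nonnegative moments: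
`E[⟪U, V⟫ ^ n] = ∑ p, E[∏ k, U (p k)] ^ 2`, that is, the squared norm of `E[U^{⊗n}]`. -/
lemma integral_inner_pow_nonneg {d : ℕ} {U V : Ω → EuclideanSpace ℝ (Fin d)}
    (hU : Measurable U) (hV : Measurable V) (hUV : IdentDistrib U V P P)
    (hindep : IndepFun U V P) (hU1 : ∀ ω, ‖U ω‖ ≤ 1) (hV1 : ∀ ω, ‖V ω‖ ≤ 1) (n : ℕ) :
    0 ≤ ∫ ω, ⟪U ω, V ω⟫ ^ n ∂P := by
  set φ : (Fin n → Fin d) → EuclideanSpace ℝ (Fin d) → ℝ := fun p x ↦ ∏ k, x (p k) with hφ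
  have hφm : ∀ p, Measurable (φ p) := fun p ↦ by fun_prop
  have hφ1 : ∀ p x, ‖x‖ ≤ 1 → ‖φ p x‖ ≤ 1 := fun p x hx ↦ by
    rw [hφ, norm_prod]
    exact Finset.prod_le_one (fun _ _ ↦ norm_nonneg _)
      fun k _ ↦ (PiLp.norm_apply_le x (p k)).trans hx
  have hexp : ∀ ω, ⟪U ω, V ω⟫ ^ n = ∑ p, φ p (U ω) * φ p (V ω) := fun ω ↦ by
    simp only [PiLp.inner_apply, Fintype.sum_pow, hφ, ← Finset.prod_mul_distrib]
    simp [mul_comm]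
  simp_rw [hexp]
  rw [integral_finsetSum]
  · refine Finset.sum_nonneg fun p _ ↦ ?_
    rw [hindep.integral_fun_comp_mul_comp hU.aemeasurable hV.aemeasurable
      (hφm p).aestronglyMeasurable (hφm p).aestronglyMeasurable]
    have : ∫ ω, φ p (U ω) ∂P = ∫ ω, φ p (V ω) ∂P := (hUV.comp (hφm p)).integral_eq
    rw [this]
    exact mul_self_nonneg _
  · intro p _
    refine .of_bound (((hφm p).comp hU).mul ((hφm p).comp hV)).aestronglyMeasurable 1
      (.of_forall fun ω ↦ ?_)
    rw [norm_mul]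
    exact mul_le_one₀ (hφ1 p _ (hU1 ω)) (norm_nonneg _) (hφ1 p _ (hV1 ω))

end Moments

/-- **The expected angle at any point is at most a right angle.**  If `X₁, X₂` are independent,
identically distributed random vectors in `ℝ^d` whose common distribution charges no hyperplane
through `z`, then `E[arccos(⟨X₁−z, X₂−z⟩/(‖X₁−z‖‖X₂−z‖))] ≤ π/2`. -/
theorem expected_angle_le_pi_div_two
    {d : ℕ} (hd : 1 ≤ d) (z : EuclideanSpace ℝ (Fin d))
    {Ω : Type*} [MeasurableSpace Ω] (P : Measure Ω) [IsProbabilityMeasure P]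
    (X₁ X₂ : Ω → EuclideanSpace ℝ (Fin d))
    (hX₁ : Measurable X₁) (hX₂ : Measurable X₂)
    (hid : P.map X₁ = P.map X₂)
    (hindep : IndepFun X₁ X₂ P)
    (hplane : ∀ u : EuclideanSpace ℝ (Fin d), u ≠ 0 →
      P {ω | ⟪u, X₁ ω - z⟫ = 0} = 0) :
    ∫ ω, Real.arccos (⟪X₁ ω - z, X₂ ω - z⟫ / (‖X₁ ω - z‖ * ‖X₂ ω - z‖)) ∂P ≤ π / 2 := by
  set ν : EuclideanSpace ℝ (Fin d) → EuclideanSpace ℝ (Fin d) :=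
    fun x ↦ ‖x - z‖⁻¹ • (x - z) with hν
  have hνm : Measurable ν := by fun_prop
  have hν1 : ∀ x, ‖ν x‖ ≤ 1 := fun x ↦ by
    simp only [hν, norm_smul, norm_inv, norm_norm]
    exact inv_mul_le_one
  set T : Ω → ℝ := fun ω ↦ ⟪ν (X₁ ω), ν (X₂ ω)⟫ with hT
  have hTm : Measurable T := (hνm.comp hX₁).inner (hνm.comp hX₂)
  have hT1 : ∀ ω, |T ω| ≤ 1 := fun ω ↦
    (abs_real_inner_le_norm _ _).trans (mul_le_one₀ (hν1 _) (norm_nonneg _) (hν1 _))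
  have hX : IdentDistrib X₁ X₂ P P := ⟨hX₁.aemeasurable, hX₂.aemeasurable, hid⟩
  have hpos : 0 ≤ ∫ ω, arcsin (T ω) ∂P := integral_arcsin_nonneg hTm hT1
    (integral_inner_pow_nonneg (hνm.comp hX₁) (hνm.comp hX₂)
      (hX.comp hνm)
      (hindep.comp hνm hνm) (fun _ ↦ hν1 _) fun _ ↦ hν1 _)
  have heq : ∀ ω, Real.arccos (⟪X₁ ω - z, X₂ ω - z⟫ / (‖X₁ ω - z‖ * ‖X₂ ω - z‖)) =
      π / 2 - arcsin (T ω) := fun ω ↦ by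
    rw [arccos]
    congr 2
    simp only [hT, hν, real_inner_smul_left, real_inner_smul_right]
    rw [div_eq_mul_inv, mul_inv]
    ring
  have hint : Integrable (fun ω ↦ arcsin (T ω)) P :=
    .of_bound (measurable_arcsin.comp hTm).aestronglyMeasurable (π / 2) (.of_forall fun ω ↦
      abs_le.2 ⟨neg_pi_div_two_le_arcsin _, arcsin_le_pi_div_two _⟩)
  simp_rw [heq]
  rw [integral_sub (integrable_const _) hint]
  simpa using hpos
end
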